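/- Let β > 1 be real. There exists a function G : ℂ → ℂ such that: (i) G is analytic (complex differentiable) at every point s with Re(s) > 1 other than the points 2 + 2πik/log β, k ∈ ℤ; (ii) G(s) = ∑_{n=1}^∞ S_β(n) n^{-s} for every s with Re(s) > 2; (iii) (s-2)² G(s) → (β-1)/(2 log β) as s → 2 (s ≠ 2), and ((s-2)² G(s) - (β-1)/(2 log β))/(s-2) → c_β(0) = ((β-1)/(2 log β))(log(2π) - 1) - (β+1)/4 as s → 2; (iv) for every nonzero k ∈ ℤ, with p = 2 + 2πik/log β, (s - p) G(s) → c_β(k) = -((β-1)/(2πik)) (1 + 2πik/log β)^{-1} ζ(2πik/log β) as s → p (s ≠ p). -/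

import Mathlib

open Filter Topology

noncomputable section

/-- The Fourier coefficients `c_β(k)` from Delange's theorem. -/
def delangeCoeff (β : ℝ) (k : ℤ) : ℂ :=
  if k = 0 then
    ((((β : ℂ) - 1) / (2 * Real.log β)) * (Real.log (2 * Real.pi) - 1) - ((β : ℂ) + 1) / 4)
  else
    -(((β : ℂ) - 1) / (2 * Real.pi * Complex.I * k)) *
      (1 + 2 * Real.pi * Complex.I * k / Real.log β)⁻¹ *
      riemannZeta (2 * Real.pi * Complex.I * k / Real.log β)

/-- The periodic function `h_β` from Delange's theorem. -/
def delangeH (β : ℝ) (x : ℝ) : ℂ :=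
  ∑' k : ℤ, delangeCoeff β k * Complex.exp (2 * Real.pi * Complex.I * k * x)

/-- The interpolated cumulative sum-of-digits function `S_β(n)`. -/
def cumDigitSumInterp (β : ℝ) (n : ℕ) : ℂ :=
  (((β : ℂ) - 1) / (2 * Real.log β)) * n * Real.log n +
    delangeH β (Real.log n / Real.log β) * n

/-!
Substituting the Fourier series of `h_β` and interchanging the summations gives, for `re s > 2`,
`∑ₙ S_β(n) n⁻ˢ = -A ζ'(s - 1) + ∑ₖ c_β(k) ζ(s - 1 - iτk)` with `A = (β - 1) / (2 log β)` and
`τ = 2π / log β`. The right-hand side continues the left-hand side as far as the series over `k`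
converges locally uniformly, and its poles are those of the individual terms: `ζ'` contributes the
double pole at `2`, and the `k`-th term a simple pole at `2 + iτk` with residue `c_β(k)`.

Convergence rests on the convexity bound `ζ(σ + it) = O(|t|^{(1-σ)/2+ε})` for `0 ≤ σ ≤ 1`. Since
`c_β(k)` contains the factor `ζ(iτk)`, the bound at `σ = 0` gives `c_β(k) = O(|k|^{-3/2+ε})`, while
the shifted zeta factors are `O(|k|^{1/2-δ})` in the half-plane `re s > 1`. The convexity bound
follows from the Phragmén–Lindelöf principle and the functional equation; the growth of the gamma
factor is in turn obtained by Phragmén–Lindelöf from `|Γ(1/2 + it)|² = π / cosh(πt)`, so that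
Stirling's formula is not needed.
-/

section ConvexityPrinciple

theorem one_add_abs_rpow_le_mul (x y α : ℝ) :
    (1 + |x|) ^ α ≤ (1 + |y|) ^ α * (1 + |x - y|) ^ |α| := by
  have triangle (u v : ℝ) : 1 + |u| ≤ (1 + |v|) * (1 + |u - v|) := by
    have := abs_add_le v (u - v)
    rw [add_sub_cancel] at this
    nlinarith [mul_nonneg (abs_nonneg v) (abs_nonneg (u - v))]
  rcases le_total 0 α with hα | hα
  · rw [abs_of_nonneg hα, ← Real.mul_rpow (by positivity) (by positivity)]
    exact Real.rpow_le_rpow (by positivity) (triangle x y) hα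
  · have := Real.rpow_le_rpow (by positivity) (triangle y x) (neg_nonneg.2 hα)
    rw [Real.mul_rpow (by positivity) (by positivity), Real.rpow_neg (by positivity),
      Real.rpow_neg (by positivity), abs_sub_comm, inv_mul_eq_div, inv_le_comm₀ (by positivity)
      (by positivity), inv_div, div_le_iff₀ (by positivity)] at this
    rwa [abs_of_nonpos hα]

theorem one_add_abs_rpow_mul_exp_neg_sq_le {α : ℝ} (hα : 0 ≤ α) (v : ℝ) :
    (1 + |v|) ^ α * Real.exp (-v ^ 2) ≤ Real.exp (α ^ 2 / 4) := by
  have h : (1 + |v|) ^ α ≤ Real.exp (|v| * α) := by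
    rw [Real.exp_mul]
    gcongr
    linarith [Real.add_one_le_exp |v|]
  calc (1 + |v|) ^ α * Real.exp (-v ^ 2) ≤ Real.exp (|v| * α) * Real.exp (-v ^ 2) := by gcongr
    _ ≤ Real.exp (α ^ 2 / 4) := by
      rw [← Real.exp_add, Real.exp_le_exp]
      nlinarith [sq_nonneg (|v| - α / 2), sq_abs v]

/-- The multiplier `e^{(z - it₀)²} (1 + |t₀|)^{-ℓ(z)}`, where `ℓ` is the affine function with
`ℓ(a) = α` and `ℓ(b) = β`. It turns polynomial growth on the edges of the strip `a ≤ Re z ≤ b` into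
boundedness, uniformly in `t₀`. -/
def convexityTwist (a b α β t₀ : ℝ) (z : ℂ) : ℂ :=
  Complex.exp ((z - t₀ * Complex.I) ^ 2) *
    ((1 + |t₀| : ℝ) : ℂ) ^ (-(α + (β - α) * (z - a) / (b - a) : ℂ))

variable {a b α β : ℝ}

theorem differentiable_convexityTwist (t₀ : ℝ) : Differentiable ℂ (convexityTwist a b α β t₀) := by
  have : ((1 + |t₀| : ℝ) : ℂ) ≠ 0 := by exact_mod_cast (by positivity : (0 : ℝ) < 1 + |t₀|).ne'
  exact fun z ↦ .mul (by fun_prop) (.const_cpow (by fun_prop) (.inl this))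

theorem norm_convexityTwist (t₀ : ℝ) (z : ℂ) :
    ‖convexityTwist a b α β t₀ z‖ = Real.exp (z.re ^ 2 - (z.im - t₀) ^ 2) *
      (1 + |t₀|) ^ (-(α + (β - α) * (z.re - a) / (b - a))) := by
  have hℓ : -(α + (β - α) * (z - a) / (b - a) : ℂ) =
      ((-α : ℝ) : ℂ) - ((β - α) / (b - a) : ℝ) * (z - a) := by
    push_cast
    ring
  rw [convexityTwist, norm_mul, Complex.norm_exp,
    Complex.norm_cpow_eq_rpow_re_of_pos (by positivity), hℓ, Complex.sub_re, Complex.re_ofReal_mul]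
  congr 2
  · simp [sq]
  · simp only [Complex.ofReal_re, Complex.sub_re]
    ring

theorem norm_convexityTwist_le (t₀ : ℝ) {z : ℂ} (hza : a < z.re) (hzb : z.re < b) :
    ‖convexityTwist a b α β t₀ z‖ ≤
      Real.exp (a ^ 2 + b ^ 2) * (1 + |t₀|) ^ (|α| + |β|) := by
  have hθ₀ : 0 ≤ (z.re - a) / (b - a) := div_nonneg (by linarith) (by linarith)
  have hθ₁ : (z.re - a) / (b - a) ≤ 1 := (div_le_one (by linarith)).2 (by linarith)
  rw [norm_convexityTwist, mul_div_assoc]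
  gcongr
  · nlinarith [sq_nonneg (z.im - t₀), sq_nonneg (z.re - a), sq_nonneg (b - z.re), sq_nonneg (a + b)]
  · linarith [abs_nonneg t₀]
  · nlinarith [neg_abs_le α, neg_abs_le β, abs_nonneg α, abs_nonneg β]

theorem exp_mul_rpow_mul_le {N A c t t₀ : ℝ} (hA : 0 ≤ A) (hN : N ≤ A * (1 + |t|) ^ α) :
    Real.exp (c ^ 2 - (t - t₀) ^ 2) * (1 + |t₀|) ^ (-α) * N ≤ A * Real.exp (c ^ 2 + α ^ 2 / 4) := by
  have hpow := one_add_abs_rpow_le_mul t t₀ α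
  have hexp := one_add_abs_rpow_mul_exp_neg_sq_le (abs_nonneg α) (t - t₀)
  calc Real.exp (c ^ 2 - (t - t₀) ^ 2) * (1 + |t₀|) ^ (-α) * N
      ≤ Real.exp (c ^ 2 - (t - t₀) ^ 2) * (1 + |t₀|) ^ (-α) *
          (A * ((1 + |t₀|) ^ α * (1 + |t - t₀|) ^ |α|)) := by
        gcongr
        exact hN.trans (by gcongr)
    _ = A * Real.exp (c ^ 2) * ((1 + |t - t₀|) ^ |α| * Real.exp (-(t - t₀) ^ 2)) := by
        rw [sub_eq_add_neg (c ^ 2), Real.exp_add, Real.rpow_neg (by positivity)]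
        field_simp
    _ ≤ A * Real.exp (c ^ 2) * Real.exp (|α| ^ 2 / 4) := by gcongr
    _ = A * Real.exp (c ^ 2 + α ^ 2 / 4) := by rw [sq_abs, Real.exp_add, mul_assoc]

variable {E : Type*} [NormedAddCommGroup E] [NormedSpace ℂ E] {f : ℂ → E} {A B : ℝ}

theorem exists_norm_le_rpow_of_vertical_strip (hab : a < b)
    (hfd : DiffContOnCl ℂ f (Complex.re ⁻¹' Set.Ioo a b))
    (hgrowth : ∃ c < Real.pi / (b - a), ∃ K,
      f =O[comap (fun z : ℂ ↦ |z.im|) atTop ⊓ 𝓟 (Complex.re ⁻¹' Set.Ioo a b)]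
        fun z ↦ Real.exp (K * Real.exp (c * |z.im|)))
    (ha : ∀ z : ℂ, z.re = a → ‖f z‖ ≤ A * (1 + |z.im|) ^ α)
    (hb : ∀ z : ℂ, z.re = b → ‖f z‖ ≤ B * (1 + |z.im|) ^ β) :
    ∃ C, ∀ z : ℂ, a ≤ z.re → z.re ≤ b →
      ‖f z‖ ≤ C * (1 + |z.im|) ^ (α + (β - α) * (z.re - a) / (b - a)) := by
  have hA : 0 ≤ A := by simpa using (norm_nonneg _).trans (ha a (Complex.ofReal_re a))
  have hB : 0 ≤ B := by simpa using (norm_nonneg _).trans (hb b (Complex.ofReal_re b))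
  set D := A * Real.exp (a ^ 2 + α ^ 2 / 4) + B * Real.exp (b ^ 2 + β ^ 2 / 4)
  refine ⟨D, fun z₀ hz₀a hz₀b ↦ ?_⟩
  set F : ℂ → E := fun z ↦ convexityTwist a b α β z₀.im z • f z
  have hFgrowth : ∃ c < Real.pi / (b - a), ∃ K,
      F =O[comap (fun z : ℂ ↦ |z.im|) atTop ⊓ 𝓟 (Complex.re ⁻¹' Set.Ioo a b)]
        fun z ↦ Real.exp (K * Real.exp (c * |z.im|)) := by
    obtain ⟨c, hc, K, hK⟩ := hgrowth
    refine ⟨c, hc, K, ?_⟩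
    have htwist : convexityTwist a b α β z₀.im
        =O[comap (fun z : ℂ ↦ |z.im|) atTop ⊓ 𝓟 (Complex.re ⁻¹' Set.Ioo a b)] fun _ ↦ (1 : ℝ) :=
      .of_bound (Real.exp (a ^ 2 + b ^ 2) * (1 + |z₀.im|) ^ (|α| + |β|)) <|
        eventually_inf_principal.2 <| .of_forall fun z hz ↦ by
          simpa using norm_convexityTwist_le z₀.im hz.1 hz.2
    simpa using htwist.smul hK
  have hFa (z : ℂ) (hz : z.re = a) : ‖F z‖ ≤ D := by
    have := exp_mul_rpow_mul_le (c := a) (t₀ := z₀.im) hA (ha z hz)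
    rw [norm_smul, norm_convexityTwist, hz, sub_self, mul_zero, zero_div, add_zero]
    exact this.trans (le_add_of_nonneg_right (by positivity))
  have hFb (z : ℂ) (hz : z.re = b) : ‖F z‖ ≤ D := by
    have := exp_mul_rpow_mul_le (c := b) (t₀ := z₀.im) hB (hb z hz)
    rw [norm_smul, norm_convexityTwist, hz, mul_div_cancel_right₀ _ (sub_pos.2 hab).ne',
      add_sub_cancel]
    exact this.trans (le_add_of_nonneg_left (by positivity))
  have key : ‖F z₀‖ ≤ D := PhragmenLindelof.vertical_strip
    ((differentiable_convexityTwist z₀.im).diffContOnCl.smul hfd) hFgrowth hFa hFb hz₀a hz₀b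
  rw [norm_smul, norm_convexityTwist, sub_self, Real.rpow_neg (by positivity), mul_right_comm,
    ← div_eq_mul_inv, div_le_iff₀ (by positivity)] at key
  refine le_trans (le_mul_of_one_le_left (norm_nonneg _) (Real.one_le_exp ?_)) key
  nlinarith [sq_nonneg z₀.re]

end ConvexityPrinciple

section FiniteOrder

theorem isBigO_exp_exp_of_norm_le_exp {E : Type*} [Norm E] {f : ℂ → E} {a b K B : ℝ} (hab : a < b)
    (hf : ∀ z : ℂ, a ≤ z.re → z.re ≤ b → 1 ≤ |z.im| → ‖f z‖ ≤ K * Real.exp (B * |z.im|)) :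
    ∃ c < Real.pi / (b - a), ∃ K',
      f =O[comap (fun z : ℂ ↦ |z.im|) atTop ⊓ 𝓟 (Complex.re ⁻¹' Set.Ioo a b)]
        fun z ↦ Real.exp (K' * Real.exp (c * |z.im|)) := by
  set c := Real.pi / (b - a) / 2
  have hc : 0 < c := div_pos (div_pos Real.pi_pos (sub_pos.2 hab)) two_pos
  refine ⟨c, half_lt_self (div_pos Real.pi_pos (sub_pos.2 hab)), |B| / c, .of_bound |K| ?_⟩
  refine eventually_inf_principal.2 <|
    (tendsto_comap.eventually (eventually_ge_atTop 1)).mono fun z him hz ↦ ?_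
  have hexp : B * |z.im| ≤ |B| / c * Real.exp (c * |z.im|) := by
    calc B * |z.im| ≤ |B| / c * (c * |z.im|) := by
          rw [← mul_assoc, div_mul_cancel₀ _ hc.ne']
          gcongr
          exact le_abs_self B
      _ ≤ |B| / c * Real.exp (c * |z.im|) := by
          gcongr
          linarith [Real.add_one_le_exp (c * |z.im|)]
  rw [Real.norm_of_nonneg (Real.exp_nonneg _)]
  exact (hf z hz.1.le hz.2.le him).trans (by gcongr; exact le_abs_self K)

theorem norm_cos_le_exp_abs_im (z : ℂ) : ‖Complex.cos z‖ ≤ Real.exp |z.im| := by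
  have h₁ : ‖Complex.exp (z * Complex.I)‖ ≤ Real.exp |z.im| := by
    simpa [Complex.norm_exp] using neg_le_abs z.im
  have h₂ : ‖Complex.exp (-z * Complex.I)‖ ≤ Real.exp |z.im| := by
    simpa [Complex.norm_exp] using le_abs_self z.im
  rw [Complex.cos, norm_div, RCLike.norm_ofNat, div_le_iff₀ two_pos]
  linarith [norm_add_le (Complex.exp (z * Complex.I)) (Complex.exp (-z * Complex.I))]

theorem norm_sin_le_exp_abs_im (z : ℂ) : ‖Complex.sin z‖ ≤ Real.exp |z.im| := by
  have := norm_cos_le_exp_abs_im (z - Real.pi / 2)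
  rwa [Complex.cos_sub_pi_div_two, show (z - Real.pi / 2).im = z.im by simp] at this

theorem exists_norm_mellin_le {E : Type*} [NormedAddCommGroup E] [NormedSpace ℂ E] {f : ℝ → E}
    {a b : ℝ} (ha : MellinConvergent f a) (hb : MellinConvergent f b) :
    ∃ C, ∀ s : ℂ, a ≤ s.re → s.re ≤ b → ‖mellin f s‖ ≤ C := by
  refine ⟨_, fun s hsa hsb ↦ MeasureTheory.norm_integral_le_of_norm_le (ha.norm.add hb.norm) ?_⟩
  filter_upwards [MeasureTheory.ae_restrict_mem measurableSet_Ioi] with t (ht : 0 < t)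
  simp only [Pi.add_apply, norm_smul, Complex.norm_cpow_eq_rpow_re_of_pos ht, Complex.sub_re,
    Complex.ofReal_re, Complex.one_re, ← add_mul]
  gcongr
  rcases le_total t 1 with h | h
  · exact le_add_of_le_of_nonneg
      (Real.rpow_le_rpow_of_exponent_ge ht h (by linarith)) (by positivity)
  · exact le_add_of_nonneg_of_le (by positivity)
      (Real.rpow_le_rpow_of_exponent_le h (by linarith))

theorem exists_norm_Gamma_le {a : ℝ} (ha : 0 < a) (b : ℝ) :
    ∃ C, ∀ s : ℂ, a ≤ s.re → s.re ≤ b → ‖Complex.Gamma s‖ ≤ C := by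
  have hconv {c : ℝ} (hc : 0 < c) : MellinConvergent (fun x ↦ (Real.exp (-x) : ℂ)) c := by
    simpa [MellinConvergent, mul_comm] using Complex.GammaIntegral_convergent (s := c) (by simpa)
  obtain ⟨C, hC⟩ := exists_norm_mellin_le (hconv ha) (hconv (lt_max_of_lt_left ha : 0 < max a b))
  refine ⟨C, fun s hsa hsb ↦ ?_⟩
  rw [Complex.Gamma_eq_integral (ha.trans_le hsa), Complex.GammaIntegral_eq_mellin]
  exact hC s hsa (le_max_of_le_right hsb)

theorem exists_norm_completedRiemannZeta₀_le (a b : ℝ) :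
    ∃ C, ∀ s : ℂ, a ≤ s.re → s.re ≤ b → ‖completedRiemannZeta₀ s‖ ≤ C := by
  have hMellin := (HurwitzZeta.hurwitzEvenFEPair 0).isStrongFEPair_toStrongFEPair.hasMellin
  obtain ⟨C, hC⟩ := exists_norm_mellin_le (hMellin (a / 2 : ℝ)).1 (hMellin (b / 2 : ℝ)).1
  refine ⟨C / 2, fun s hsa hsb ↦ ?_⟩
  change ‖mellin _ (s / 2) / 2‖ ≤ _
  rw [norm_div, RCLike.norm_ofNat]
  have hre : (s / 2).re = s.re / 2 := Complex.div_ofNat_re s 2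
  gcongr
  exact hC (s / 2) (by linarith) (by linarith)

end FiniteOrder

section GammaFactor

open scoped ComplexConjugate in
theorem sq_norm_cos (z : ℂ) :
    ‖Complex.cos z‖ ^ 2 = (Real.cos (2 * z.re) + Real.cosh (2 * z.im)) / 2 := by
  apply Complex.ofReal_injective
  have hcos : Complex.cos (z + conj z) + Complex.cos (z - conj z) =
      2 * (Complex.cos z * Complex.cos (conj z)) := by
    rw [Complex.cos_add, Complex.cos_sub]; ring
  rw [Complex.add_conj, Complex.sub_conj, Complex.cos_mul_I] at hcos
  push_cast at hcos ⊢
  rw [hcos, Complex.cos_conj, Complex.mul_conj']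
  ring

open scoped ComplexConjugate in
theorem sq_norm_Gamma_of_re_eq_half {s : ℂ} (hs : s.re = 1 / 2) :
    ‖Complex.Gamma s‖ ^ 2 = Real.pi / Real.cosh (Real.pi * s.im) := by
  apply Complex.ofReal_injective
  have hconj : conj s = 1 - s := by
    apply Complex.ext <;> norm_num [hs]
  have hsin : Complex.sin (Real.pi * s) = Complex.cosh (Real.pi * s.im) := by
    rw [← Complex.cos_mul_I, ← Complex.cos_pi_div_two_sub, ← Complex.cos_neg,
      ← Complex.re_add_im s, hs]
    congr 1
    simp only [Complex.add_im, Complex.mul_I_im, Complex.ofReal_im, Complex.ofReal_re, zero_add]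
    push_cast
    ring
  push_cast
  rw [← Complex.mul_conj', ← Complex.Gamma_conj, hconj, Complex.Gamma_mul_Gamma_one_sub, hsin]

theorem norm_Gamma_mul_norm_cos {s z : ℂ} (hs : s.re = 1 / 2) (hz : Real.cos (Real.pi * z.re) = 0)
    (him : z.im = s.im) :
    ‖Complex.Gamma s‖ * ‖Complex.cos (Real.pi * z / 2)‖ = √(Real.pi / 2) := by
  have hcos : ‖Complex.cos (Real.pi * z / 2)‖ ^ 2 = Real.cosh (Real.pi * s.im) / 2 := by
    rw [sq_norm_cos, Complex.div_ofNat_re, Complex.div_ofNat_im, Complex.re_ofReal_mul,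
      Complex.im_ofReal_mul, mul_div_cancel₀ _ two_ne_zero, mul_div_cancel₀ _ two_ne_zero, hz,
      zero_add, him]
  rw [← sq_eq_sq₀ (by positivity) (Real.sqrt_nonneg _), Real.sq_sqrt (by positivity), mul_pow,
    sq_norm_Gamma_of_re_eq_half hs, hcos]
  field_simp [Real.cosh_pos]

theorem ne_neg_natCast_of_re_pos {s : ℂ} (hs : 0 < s.re) (n : ℕ) : s ≠ -n := by
  rintro rfl
  exact hs.not_ge (by simp)

/-- The factor `Γ(s) cos(πs/2)` of the functional equation
`ζ(1 - s) = 2 (2π)⁻ˢ Γ(s) cos(πs/2) ζ(s)`. -/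
def gammaCos (s : ℂ) : ℂ := Complex.Gamma s * Complex.cos (Real.pi * s / 2)

theorem norm_gammaCos_of_re_eq_half {s : ℂ} (hs : s.re = 1 / 2) :
    ‖gammaCos s‖ = √(Real.pi / 2) := by
  rw [gammaCos, norm_mul]
  refine norm_Gamma_mul_norm_cos hs ?_ rfl
  rw [hs, mul_one_div, Real.cos_pi_div_two]

theorem norm_gammaCos_of_re_eq_three_halves {s : ℂ} (hs : s.re = 3 / 2) :
    ‖gammaCos s‖ = ‖s - 1‖ * √(Real.pi / 2) := by
  have hs₁ : (s - 1).re = 1 / 2 := by rw [Complex.sub_re, hs, Complex.one_re]; norm_num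
  have hs₀ : s - 1 ≠ 0 := fun h ↦ by norm_num [h] at hs₁
  have hΓ : Complex.Gamma s = (s - 1) * Complex.Gamma (s - 1) := by
    rw [← Complex.Gamma_add_one _ hs₀, sub_add_cancel]
  rw [gammaCos, hΓ, norm_mul, norm_mul, mul_assoc]
  congr 1
  refine norm_Gamma_mul_norm_cos hs₁ ?_ (by simp)
  rw [hs, show Real.pi * (3 / 2) = Real.pi / 2 + Real.pi by ring, Real.cos_add_pi,
    Real.cos_pi_div_two, neg_zero]

theorem exists_norm_gammaCos_le :
    ∃ C, ∀ s : ℂ, 1 / 2 ≤ s.re → s.re ≤ 3 / 2 →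
      ‖gammaCos s‖ ≤ C * (1 + |s.im|) ^ (s.re - 1 / 2) := by
  obtain ⟨K, hK⟩ := exists_norm_Gamma_le (a := 1 / 2) (by norm_num) (3 / 2)
  have hgrowth (s : ℂ) (hs₁ : 1 / 2 ≤ s.re) (hs₂ : s.re ≤ 3 / 2) :
      ‖gammaCos s‖ ≤ K * Real.exp (Real.pi / 2 * |s.im|) := by
    have hcos := norm_cos_le_exp_abs_im (Real.pi * s / 2)
    rw [Complex.div_ofNat_im, Complex.im_ofReal_mul, mul_div_right_comm Real.pi s.im, abs_mul,
      abs_of_pos Real.pi_div_two_pos] at hcos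
    rw [gammaCos, norm_mul]
    exact mul_le_mul (hK s hs₁ hs₂) hcos (norm_nonneg _) ((norm_nonneg _).trans (hK s hs₁ hs₂))
  have hdiff : DiffContOnCl ℂ gammaCos (Complex.re ⁻¹' Set.Ioo (1 / 2) (3 / 2)) := by
    refine DifferentiableOn.diffContOnCl fun s hs ↦ DifferentiableAt.differentiableWithinAt ?_
    rw [Complex.closure_preimage_re, closure_Ioo (by norm_num)] at hs
    have hΓ := Complex.differentiableAt_Gamma s (ne_neg_natCast_of_re_pos (by linarith [hs.1]))
    unfold gammaCos
    fun_prop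
  have hedge (s : ℂ) (hs : s.re = 3 / 2) :
      ‖gammaCos s‖ ≤ √(Real.pi / 2) * (1 + |s.im|) ^ (1 : ℝ) := by
    have hs₁ : ‖s - 1‖ ≤ 1 + |s.im| := by
      refine (Complex.norm_le_abs_re_add_abs_im _).trans ?_
      rw [Complex.sub_re, hs, Complex.sub_im, Complex.one_re, Complex.one_im, sub_zero]
      norm_num [abs_of_pos]
    rw [norm_gammaCos_of_re_eq_three_halves hs, Real.rpow_one, mul_comm]
    gcongr
  obtain ⟨C, hC⟩ := exists_norm_le_rpow_of_vertical_strip (by norm_num) hdiff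
    (isBigO_exp_exp_of_norm_le_exp (by norm_num) fun z h₁ h₂ _ ↦ hgrowth z h₁ h₂)
    (fun s hs ↦ by simp [norm_gammaCos_of_re_eq_half hs]) hedge
    (A := √(Real.pi / 2)) (α := 0)
  exact ⟨C, fun s h₁ h₂ ↦ (hC s h₁ h₂).trans_eq (by norm_num)⟩

end GammaFactor

section ZetaConvexity

theorem exists_norm_riemannZeta_le {σ : ℝ} (hσ : 1 < σ) :
    ∃ K, ∀ s : ℂ, σ ≤ s.re → ‖riemannZeta s‖ ≤ K := by
  have hsum : Summable fun n : ℕ ↦ (((n + 1 : ℕ) : ℝ) ^ σ)⁻¹ :=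
    (summable_nat_add_iff 1).2 (Real.summable_nat_rpow_inv.2 hσ)
  refine ⟨∑' n : ℕ, (((n + 1 : ℕ) : ℝ) ^ σ)⁻¹, fun s hs ↦ ?_⟩
  rw [zeta_eq_tsum_one_div_nat_add_one_cpow (hσ.trans_le hs)]
  refine tsum_of_norm_bounded hsum.hasSum fun n ↦ ?_
  rw [norm_div, norm_one, one_div, ← Nat.cast_add_one, Complex.norm_natCast_cpow_of_pos n.succ_pos]
  gcongr
  exact_mod_cast n.succ_pos

theorem inv_Gamma_eq {s : ℂ} (hs : s.im ≠ 0) :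
    (Complex.Gamma s)⁻¹ = Complex.Gamma (1 - s) * Complex.sin (Real.pi * s) / Real.pi := by
  have hπ : (Real.pi : ℂ) ≠ 0 := Complex.ofReal_ne_zero.2 Real.pi_ne_zero
  have hsin : Complex.sin (Real.pi * s) ≠ 0 := fun h ↦ by
    obtain ⟨k, hk⟩ := Complex.sin_eq_zero_iff.1 h
    rw [mul_comm, mul_left_inj' hπ] at hk
    exact hs (by simp [hk])
  refine inv_eq_of_mul_eq_one_right ?_
  rw [← mul_div_assoc, ← mul_assoc, Complex.Gamma_mul_Gamma_one_sub, div_mul_cancel₀ _ hsin,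
    div_self hπ]

theorem norm_riemannZeta_le_mul {s : ℂ} (hs : 1 ≤ |s.im|) :
    ‖riemannZeta s‖ ≤ (‖completedRiemannZeta₀ s‖ + 2) *
      (Real.pi ^ (s.re / 2) * (‖Complex.Gamma (1 - s / 2)‖ * Real.exp (Real.pi / 2 * |s.im|))) := by
  have him : s.im ≠ 0 := fun h ↦ by norm_num [h] at hs
  have hs₀ : s ≠ 0 := fun h ↦ him (by simp [h])
  have hinv (w : ℂ) (hw : |w.im| = |s.im|) : ‖1 / w‖ ≤ 1 := by
    rw [norm_div, norm_one]
    exact div_le_one_of_le₀ (hs.trans (hw ▸ Complex.abs_im_le_norm w)) (norm_nonneg _)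
  have hnum : ‖completedRiemannZeta₀ s - 1 / s - 1 / (1 - s)‖ ≤ ‖completedRiemannZeta₀ s‖ + 2 := by
    have h₁ := norm_sub_le (completedRiemannZeta₀ s - 1 / s) (1 / (1 - s))
    have h₂ := norm_sub_le (completedRiemannZeta₀ s) (1 / s)
    linarith [hinv s rfl, hinv (1 - s) (by simp)]
  have hGamma : ‖(Complex.Gamma (s / 2))⁻¹‖ ≤
      ‖Complex.Gamma (1 - s / 2)‖ * Real.exp (Real.pi / 2 * |s.im|) := by
    have hsin := norm_sin_le_exp_abs_im ((Real.pi / 2 : ℝ) * s)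
    rw [Complex.im_ofReal_mul, abs_mul, abs_of_pos Real.pi_div_two_pos, Complex.ofReal_div,
      Complex.ofReal_ofNat, div_mul_eq_mul_div, ← mul_div_assoc'] at hsin
    rw [inv_Gamma_eq (by rwa [Complex.div_ofNat_im, div_ne_zero_iff, and_iff_left two_ne_zero]),
      norm_div, norm_mul, Complex.norm_real, Real.norm_of_nonneg Real.pi_pos.le]
    refine (div_le_self (by positivity) (by linarith [Real.pi_gt_three])).trans ?_
    gcongr
  rw [riemannZeta_eq_completedRiemannZeta₀ hs₀, div_eq_mul_inv, mul_inv, norm_mul, norm_mul,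
    ← Complex.cpow_neg, neg_div, neg_neg, Complex.norm_cpow_eq_rpow_re_of_pos Real.pi_pos,
    Complex.div_ofNat_re]
  gcongr

theorem exists_norm_riemannZeta_le_exp (a : ℝ) {b : ℝ} (hb : b < 2) :
    ∃ K, ∀ s : ℂ, a ≤ s.re → s.re ≤ b → 1 ≤ |s.im| →
      ‖riemannZeta s‖ ≤ K * Real.exp (Real.pi / 2 * |s.im|) := by
  obtain ⟨C₁, hC₁⟩ := exists_norm_completedRiemannZeta₀_le a b
  obtain ⟨C₂, hC₂⟩ := exists_norm_Gamma_le (a := 1 - b / 2) (by linarith) (1 - a / 2)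
  refine ⟨(C₁ + 2) * (Real.pi ^ (b / 2) * C₂), fun s hsa hsb him ↦ ?_⟩
  have h₁ := hC₁ s hsa hsb
  have hre : (1 - s / 2).re = 1 - s.re / 2 := by simp
  have h₂ : ‖Complex.Gamma (1 - s / 2)‖ ≤ C₂ :=
    hC₂ _ (by rw [hre]; linarith) (by rw [hre]; linarith)
  have h₀ : 0 ≤ C₁ := (norm_nonneg _).trans h₁
  refine (norm_riemannZeta_le_mul him).trans ?_
  rw [mul_assoc, mul_assoc (Real.pi ^ (b / 2))]
  gcongr
  linarith [Real.pi_gt_three]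

theorem exists_norm_riemannZeta_le_of_re_eq_neg {η : ℝ} (hη : 0 < η) (hη' : η ≤ 1 / 2) :
    ∃ C, ∀ s : ℂ, s.re = -η → ‖riemannZeta s‖ ≤ C * (1 + |s.im|) ^ (1 / 2 + η) := by
  obtain ⟨K, hK⟩ := exists_norm_riemannZeta_le (lt_add_of_pos_right 1 hη)
  obtain ⟨C, hC⟩ := exists_norm_gammaCos_le
  refine ⟨2 * (2 * Real.pi) ^ (-(1 + η)) * C * K, fun s hs ↦ ?_⟩
  have hre : (1 - s).re = 1 + η := by simp [hs]
  have hs₁ : 1 - s ≠ 1 := fun h ↦ by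
    rw [h, Complex.one_re] at hre
    linarith
  have hζ : riemannZeta s =
      2 * ((2 * Real.pi : ℝ) : ℂ) ^ (-(1 - s)) * gammaCos (1 - s) * riemannZeta (1 - s) := by
    have := riemannZeta_one_sub (ne_neg_natCast_of_re_pos (by linarith : 0 < (1 - s).re)) hs₁
    rw [sub_sub_cancel] at this
    rw [this, gammaCos, Complex.ofReal_mul, Complex.ofReal_ofNat]
    ring
  have hcos := hC (1 - s) (by linarith) (by linarith)
  have him : |(1 - s).im| = |s.im| := by simp
  rw [hre, him, show 1 + η - 1 / 2 = 1 / 2 + η by ring] at hcos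
  rw [hζ, norm_mul, norm_mul, norm_mul, RCLike.norm_ofNat,
    Complex.norm_cpow_eq_rpow_re_of_pos (by positivity), Complex.neg_re, hre, mul_right_comm _ K,
    mul_assoc _ C]
  gcongr
  · exact mul_nonneg (by positivity) ((norm_nonneg _).trans hcos)
  · exact hK _ hre.ge

theorem riemannZeta₁_eq_mul {s : ℂ} (hs : s ≠ 1) :
    riemannZeta₁ s = (s - 1) * riemannZeta s := by
  rw [riemannZeta_eq_inv_sub_mul hs, mul_inv_cancel_left₀ (sub_ne_zero.2 hs)]

theorem norm_riemannZeta₁_le_mul {s : ℂ} (hs : s ≠ 1) (hre : |s.re - 1| ≤ 2) :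
    ‖riemannZeta₁ s‖ ≤ 2 * (1 + |s.im|) * ‖riemannZeta s‖ := by
  rw [riemannZeta₁_eq_mul hs, norm_mul]
  gcongr
  refine (Complex.norm_le_abs_re_add_abs_im _).trans ?_
  rw [Complex.sub_re, Complex.sub_im, Complex.one_re, Complex.one_im, sub_zero]
  linarith [abs_nonneg s.im]

theorem exists_norm_riemannZeta₁_le {η : ℝ} (hη : 0 < η) (hη' : η ≤ 1 / 2) :
    ∃ C, ∀ s : ℂ, -η ≤ s.re → s.re ≤ 1 + η →
      ‖riemannZeta₁ s‖ ≤ C * (1 + |s.im|) ^ (1 + (1 + η - s.re) / 2) := by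
  have hne {s : ℂ} (hs : s.re ≠ 1) : s ≠ 1 := fun h ↦ hs (by simp [h])
  have hgrowth : ∃ K, ∀ s : ℂ, -η ≤ s.re → s.re ≤ 1 + η → 1 ≤ |s.im| →
      ‖riemannZeta₁ s‖ ≤ K * Real.exp ((1 + Real.pi / 2) * |s.im|) := by
    obtain ⟨K, hK⟩ := exists_norm_riemannZeta_le_exp (-η) (b := 1 + η) (by linarith)
    refine ⟨2 * K, fun s hs₁ hs₂ him ↦ ?_⟩
    have hs : s ≠ 1 := fun h ↦ by norm_num [h] at him
    refine (norm_riemannZeta₁_le_mul hs (abs_le.2 ⟨by linarith, by linarith⟩)).trans ?_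
    rw [one_add_mul, Real.exp_add, mul_mul_mul_comm]
    gcongr
    · linarith [Real.add_one_le_exp |s.im|]
    · exact hK s hs₁ hs₂ him
  obtain ⟨K, hK⟩ := hgrowth
  obtain ⟨A, hA⟩ := exists_norm_riemannZeta_le_of_re_eq_neg hη hη'
  obtain ⟨B, hB⟩ := exists_norm_riemannZeta_le (lt_add_of_pos_right 1 hη)
  have hleft (s : ℂ) (hs : s.re = -η) :
      ‖riemannZeta₁ s‖ ≤ 2 * A * (1 + |s.im|) ^ (3 / 2 + η) := by
    have hre : |s.re - 1| ≤ 2 := abs_le.2 ⟨by linarith, by linarith⟩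
    refine (norm_riemannZeta₁_le_mul (hne (by linarith)) hre).trans ?_
    rw [show 3 / 2 + η = 1 + (1 / 2 + η) by ring, Real.rpow_one_add' (by positivity) (by linarith),
      mul_mul_mul_comm]
    gcongr
    exact hA s hs
  have hright (s : ℂ) (hs : s.re = 1 + η) : ‖riemannZeta₁ s‖ ≤ 2 * B * (1 + |s.im|) ^ (1 : ℝ) := by
    have hre : |s.re - 1| ≤ 2 := abs_le.2 ⟨by linarith, by linarith⟩
    refine (norm_riemannZeta₁_le_mul (hne (by linarith)) hre).trans ?_
    rw [Real.rpow_one, mul_right_comm]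
    gcongr
    exact hB s hs.ge
  obtain ⟨C, hC⟩ := exists_norm_le_rpow_of_vertical_strip (by linarith)
    differentiable_riemannZeta₁.diffContOnCl (isBigO_exp_exp_of_norm_le_exp (by linarith) hK)
    hleft hright
  refine ⟨C, fun s hs₁ hs₂ ↦ (hC s hs₁ hs₂).trans_eq ?_⟩
  have hwidth : 1 + η - -η ≠ 0 := (by linarith : 0 < 1 + η - -η).ne'
  congr 2
  field_simp
  ring

theorem exists_norm_riemannZeta_le_rpow {σ e : ℝ} (hσ₀ : 0 ≤ σ) (hσ₁ : σ ≤ 1)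
    (he : (1 - σ) / 2 < e) :
    ∃ C, ∀ s : ℂ, σ ≤ s.re → 1 ≤ |s.im| → ‖riemannZeta s‖ ≤ C * (1 + |s.im|) ^ e := by
  set η := min (1 / 2) (2 * e - (1 - σ))
  have hη : 0 < η := lt_min (by norm_num) (by linarith)
  have hηe : η ≤ 2 * e - (1 - σ) := min_le_right _ _
  obtain ⟨C, hC⟩ := exists_norm_riemannZeta₁_le hη (min_le_left _ _)
  obtain ⟨K, hK⟩ := exists_norm_riemannZeta_le (lt_add_of_pos_right 1 hη)
  refine ⟨max (2 * C) K, fun s hs him ↦ ?_⟩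
  have hone : 1 ≤ (1 + |s.im|) ^ e := Real.one_le_rpow (by linarith) (by linarith)
  rcases le_total (1 + η) s.re with hre | hre
  · have h := hK s hre
    exact (h.trans (le_max_right _ _)).trans
      (le_mul_of_one_le_right (((norm_nonneg _).trans h).trans (le_max_right _ _)) hone)
  have hs₁ : s ≠ 1 := fun h ↦ by norm_num [h] at him
  have hC₀ : 0 ≤ C := by
    simpa using (norm_nonneg _).trans
      (hC (1 : ℝ) (by rw [Complex.ofReal_re]; linarith) (by simp [hη.le]))
  have hsub : 1 + |s.im| ≤ 2 * ‖s - 1‖ := by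
    have := Complex.abs_im_le_norm (s - 1)
    rw [Complex.sub_im, Complex.one_im, sub_zero] at this
    linarith
  have hmul : ‖s - 1‖ * ‖riemannZeta s‖ ≤ ‖s - 1‖ * (2 * C * (1 + |s.im|) ^ e) := by
    calc ‖s - 1‖ * ‖riemannZeta s‖ = ‖riemannZeta₁ s‖ := by rw [riemannZeta₁_eq_mul hs₁, norm_mul]
      _ ≤ C * (1 + |s.im|) ^ (1 + (1 + η - s.re) / 2) := hC s (by linarith) hre
      _ ≤ C * (1 + |s.im|) ^ (1 + e) := by gcongr <;> linarith
      _ = (1 + |s.im|) * (C * (1 + |s.im|) ^ e) := by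
          rw [Real.rpow_one_add' (by positivity) (by linarith)]; ring
      _ ≤ 2 * ‖s - 1‖ * (C * (1 + |s.im|) ^ e) := by gcongr
      _ = ‖s - 1‖ * (2 * C * (1 + |s.im|) ^ e) := by ring
  refine (le_of_mul_le_mul_left hmul (by linarith)).trans ?_
  gcongr
  exact le_max_left _ _

end ZetaConvexity

section ShiftedZetaSeries

theorem differentiableAt_tsum_of_eventually {ι E : Type*} [NormedAddCommGroup E] [NormedSpace ℂ E]
    [CompleteSpace E] {F : ι → ℂ → E} {u : ι → ℝ} {U : Set ℂ} {z₀ : ℂ} (hu : Summable u)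
    (hU : IsOpen U) (hz₀ : z₀ ∈ U) (hdiff₀ : ∀ i, DifferentiableAt ℂ (F i) z₀)
    (hdiff : ∀ᶠ i in cofinite, DifferentiableOn ℂ (F i) U)
    (hle : ∀ᶠ i in cofinite, ∀ z ∈ U, ‖F i z‖ ≤ u i) :
    DifferentiableAt ℂ (fun z ↦ ∑' i, F i z) z₀ := by
  have hfinite := eventually_cofinite.1 (hdiff.and hle)
  set S := hfinite.toFinset
  have hS (i : ι) (hi : i ∉ S) : DifferentiableOn ℂ (F i) U ∧ ∀ z ∈ U, ‖F i z‖ ≤ u i := by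
    simpa [S] using hi
  have hsplit : (fun z ↦ ∑ i ∈ S, F i z + ∑' i : {i // i ∉ S}, F i z) =ᶠ[𝓝 z₀]
      fun z ↦ ∑' i, F i z := by
    filter_upwards [hU.mem_nhds hz₀] with z hz
    have hsum : Summable fun i ↦ F i z :=
      hu.of_norm_bounded_eventually (hle.mono fun i hi ↦ hi z hz)
    exact hsum.sum_add_tsum_subtype_compl S
  have htail : DifferentiableOn ℂ (fun z ↦ ∑' i : {i // i ∉ S}, F i z) U :=
    Complex.differentiableOn_tsum_of_summable_norm (hu.subtype _) (fun i ↦ (hS i i.2).1) hU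
      fun i ↦ (hS i i.2).2
  exact ((DifferentiableAt.fun_sum fun i _ ↦ hdiff₀ i).add
    (htail.differentiableAt (hU.mem_nhds hz₀))).congr_of_eventuallyEq hsplit.symm

/-- The series `∑ₖ aₖ ζ(z - iτk)` over `k ∈ ℤ`. -/
def shiftedZetaSeries (a : ℤ → ℂ) (τ : ℝ) (z : ℂ) : ℂ :=
  ∑' k : ℤ, a k * riemannZeta (z - τ * k * Complex.I)

variable {a : ℤ → ℂ} {τ q : ℝ}

theorem eventually_cofinite_le_abs_mul (hτ : τ ≠ 0) (R : ℝ) :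
    ∀ᶠ k : ℤ in cofinite, R ≤ |τ * k| := by
  have : Tendsto (fun k : ℤ ↦ |τ| * ‖(k : ℝ)‖) cofinite atTop :=
    (tendsto_norm_cocompact_atTop.comp Int.tendsto_coe_cofinite).const_mul_atTop (abs_pos.2 hτ)
  filter_upwards [this.eventually_ge_atTop R] with k hk
  rwa [abs_mul, ← Real.norm_eq_abs (k : ℝ)]

theorem exists_norm_riemannZeta_sub_le {σ e : ℝ} (hτ : τ ≠ 0) (hσ₀ : 0 ≤ σ) (hσ₁ : σ ≤ 1)
    (he : (1 - σ) / 2 < e) (R : ℝ) :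
    ∃ C, ∀ᶠ k : ℤ in cofinite, ∀ z : ℂ, σ ≤ z.re → |z.im| ≤ R →
      ‖riemannZeta (z - τ * k * Complex.I)‖ ≤ C * |(k : ℝ)| ^ e := by
  obtain ⟨C, hC⟩ := exists_norm_riemannZeta_le_rpow hσ₀ hσ₁ he
  refine ⟨C * (2 * |τ|) ^ e, ?_⟩
  filter_upwards [eventually_cofinite_le_abs_mul hτ (1 + R)] with k hk z hz him
  have hre : (z - τ * k * Complex.I).re = z.re := by simp
  have him' : (z - τ * k * Complex.I).im = z.im - τ * k := by simp
  have hlower : 1 ≤ |z.im - τ * k| := by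
    linarith [abs_sub_abs_le_abs_sub (τ * k) z.im, abs_sub_comm z.im (τ * k)]
  have hupper : 1 + |z.im - τ * k| ≤ 2 * |τ| * |(k : ℝ)| := by
    rw [mul_assoc, ← abs_mul]
    linarith [abs_sub z.im (τ * k)]
  have h := hC (z - τ * k * Complex.I) (by rwa [hre]) (by rwa [him'])
  rw [him'] at h
  have hC₀ : 0 ≤ C := nonneg_of_mul_nonneg_left ((norm_nonneg _).trans h) (by positivity)
  refine h.trans ?_
  rw [mul_assoc, ← Real.mul_rpow (by positivity) (by positivity)]
  gcongr
  linarith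

theorem exists_summable_norm_shiftedZetaTerm_le (hτ : τ ≠ 0) (hq : 1 < q)
    (ha : a =O[cofinite] fun k ↦ |(k : ℝ)| ^ (-q)) {σ : ℝ} (hσ₀ : 0 < σ) (hσ : 3 - 2 * q < σ)
    (R : ℝ) :
    ∃ u : ℤ → ℝ, Summable u ∧ ∀ᶠ k in cofinite, ∀ z : ℂ, σ ≤ z.re → |z.im| ≤ R →
      ‖a k * riemannZeta (z - τ * k * Complex.I)‖ ≤ u k := by
  obtain ⟨A, hA⟩ := ha.bound
  obtain ⟨e, he, heq⟩ := exists_between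
    (show (1 - min σ 1) / 2 < q - 1 by rcases min_cases σ 1 with h | h <;> linarith)
  obtain ⟨C, hC⟩ := exists_norm_riemannZeta_sub_le hτ (le_min hσ₀.le zero_le_one) (min_le_right σ 1)
    he R
  refine ⟨fun k ↦ A * C * |(k : ℝ)| ^ (-(q - e)),
    (Real.summable_abs_int_rpow (by linarith)).mul_left _, ?_⟩
  filter_upwards [hA, hC, eventually_cofinite_ne (0 : ℤ)] with k hAk hCk hk z hz him
  rw [Real.norm_of_nonneg (by positivity)] at hAk
  rw [norm_mul, show -(q - e) = -q + e by ring, Real.rpow_add (by positivity), mul_mul_mul_comm]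
  exact mul_le_mul hAk (hCk z ((min_le_left _ _).trans hz) him) (norm_nonneg _)
    ((norm_nonneg _).trans hAk)

theorem summable_shiftedZetaSeries (hτ : τ ≠ 0) (hq : 1 < q)
    (ha : a =O[cofinite] fun k ↦ |(k : ℝ)| ^ (-q)) {z : ℂ} (hz : 0 < z.re)
    (hzq : 3 - 2 * q < z.re) :
    Summable fun k : ℤ ↦ a k * riemannZeta (z - τ * k * Complex.I) := by
  obtain ⟨u, hu, hle⟩ := exists_summable_norm_shiftedZetaTerm_le hτ hq ha hz hzq |z.im|
  exact hu.of_norm_bounded_eventually (hle.mono fun k hk ↦ hk z le_rfl le_rfl)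

theorem differentiableAt_shiftedZetaSeries (hτ : τ ≠ 0) (hq : 1 < q)
    (ha : a =O[cofinite] fun k ↦ |(k : ℝ)| ^ (-q)) {z₀ : ℂ} (hz₀ : 0 < z₀.re)
    (hz₀q : 3 - 2 * q < z₀.re) (hpole : ∀ k : ℤ, a k ≠ 0 → z₀ ≠ 1 + τ * k * Complex.I) :
    DifferentiableAt ℂ (shiftedZetaSeries a τ) z₀ := by
  obtain ⟨σ, hσ, hσz⟩ := exists_between (max_lt hz₀ hz₀q)
  obtain ⟨hσ₀, hσq⟩ := max_lt_iff.1 hσ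
  set U : Set ℂ := {z | σ < z.re} ∩ {z | |z.im| < |z₀.im| + 1}
  have hU : IsOpen U := (isOpen_lt continuous_const Complex.continuous_re).inter
    (isOpen_lt Complex.continuous_im.abs continuous_const)
  obtain ⟨u, hu, hle⟩ := exists_summable_norm_shiftedZetaTerm_le hτ hq ha hσ₀ hσq (|z₀.im| + 1)
  have hdiff {k : ℤ} {z : ℂ} (hz : z ≠ 1 + τ * k * Complex.I) :
      DifferentiableAt ℂ (fun z ↦ a k * riemannZeta (z - τ * k * Complex.I)) z := by
    have := differentiableAt_riemannZeta (s := z - τ * k * Complex.I) fun h ↦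
      hz (sub_eq_iff_eq_add.1 h)
    fun_prop
  refine differentiableAt_tsum_of_eventually hu hU ⟨hσz, lt_add_one |z₀.im|⟩ (fun k ↦ ?_) ?_
    (hle.mono fun k hk z hz ↦ hk z (le_of_lt hz.1) (le_of_lt hz.2))
  · rcases eq_or_ne (a k) 0 with hk | hk
    · simp [hk]
    · exact hdiff (hpole k hk)
  · filter_upwards [eventually_cofinite_le_abs_mul hτ (|z₀.im| + 1)] with k hk
    refine fun z hz ↦ (hdiff ?_).differentiableWithinAt
    rintro rfl
    exact hk.not_gt (by simpa using hz.2)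

theorem shiftedZetaSeries_eq_add (hτ : τ ≠ 0) (hq : 1 < q)
    (ha : a =O[cofinite] fun k ↦ |(k : ℝ)| ^ (-q)) {z : ℂ} (hz : 0 < z.re)
    (hzq : 3 - 2 * q < z.re) (k : ℤ) :
    shiftedZetaSeries a τ z =
      a k * riemannZeta (z - τ * k * Complex.I) +
        shiftedZetaSeries (Function.update a k 0) τ z := by
  rw [shiftedZetaSeries, (summable_shiftedZetaSeries hτ hq ha hz hzq).tsum_eq_add_tsum_ite k]
  congr 1
  refine tsum_congr fun j ↦ ?_
  rcases eq_or_ne j k with rfl | hj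
  · simp
  · simp [hj]

theorem hasSum_cpow_neg_riemannZeta {z : ℂ} (hz : 1 < z.re) :
    HasSum (fun n : ℕ ↦ ((n + 1 : ℕ) : ℂ) ^ (-z)) (riemannZeta z) := by
  have hsum : Summable fun n : ℕ ↦ ((n + 1 : ℕ) : ℂ) ^ (-z) := by
    simpa [Complex.cpow_neg] using
      (summable_nat_add_iff 1).2 (Complex.summable_one_div_nat_cpow.2 hz)
  rw [zeta_eq_tsum_one_div_nat_add_one_cpow hz]
  convert hsum.hasSum using 3
  simp [Complex.cpow_neg]

theorem hasSum_tsum_mul_cpow_neg_shiftedZetaSeries (ha : Summable a) (τ : ℝ) {z : ℂ}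
    (hz : 1 < z.re) :
    HasSum (fun n : ℕ ↦ (∑' k : ℤ, a k * Complex.exp (τ * k * Real.log (n + 1 : ℕ) * Complex.I)) *
      ((n + 1 : ℕ) : ℂ) ^ (-z)) (shiftedZetaSeries a τ z) := by
  set F : ℕ × ℤ → ℂ := fun p ↦ a p.2 * ((p.1 + 1 : ℕ) : ℂ) ^ (-(z - τ * p.2 * Complex.I))
  have hterm (n : ℕ) (k : ℤ) : a k * Complex.exp (τ * k * Real.log (n + 1 : ℕ) * Complex.I) *
      ((n + 1 : ℕ) : ℂ) ^ (-z) = F (n, k) := by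
    have hn : ((n + 1 : ℕ) : ℂ) ≠ 0 := Nat.cast_ne_zero.2 n.succ_ne_zero
    simp only [F]
    rw [mul_assoc, neg_sub, sub_eq_add_neg, Complex.cpow_add _ _ hn,
      Complex.cpow_def_of_ne_zero hn (τ * k * Complex.I), ← Complex.natCast_log]
    ring_nf
  have hsum : Summable F := by
    have hprod := (hasSum_cpow_neg_riemannZeta hz).summable.norm.mul_of_nonneg ha.norm
      (fun _ ↦ norm_nonneg _) (fun _ ↦ norm_nonneg _)
    refine .of_norm (hprod.congr fun p ↦ ?_)
    simp only [F, norm_mul, Complex.norm_natCast_cpow_of_pos p.1.succ_pos]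
    simp [mul_comm]
  have hrow (n : ℕ) : HasSum (fun k : ℤ ↦ F (n, k))
      ((∑' k : ℤ, a k * Complex.exp (τ * k * Real.log (n + 1 : ℕ) * Complex.I)) *
        ((n + 1 : ℕ) : ℂ) ^ (-z)) := by
    rw [← tsum_mul_right, tsum_congr (hterm n)]
    exact (hsum.prod_factor n).hasSum
  have hcolumn (k : ℤ) : ∑' n : ℕ, F (n, k) = a k * riemannZeta (z - τ * k * Complex.I) := by
    simp only [F]
    rw [tsum_mul_left, (hasSum_cpow_neg_riemannZeta (by simpa using hz)).tsum_eq]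
  have htotal : ∑' p, F p = shiftedZetaSeries a τ z := by
    rw [hsum.tsum_prod, ← Summable.tsum_comm (f := fun n k ↦ F (n, k)) hsum]
    exact tsum_congr hcolumn
  exact htotal ▸ hsum.hasSum.prod_fiberwise hrow

end ShiftedZetaSeries

section ZetaDerivative

theorem differentiableAt_deriv_riemannZeta {z : ℂ} (hz : z ≠ 1) :
    DifferentiableAt ℂ (deriv riemannZeta) z :=
  (differentiableOn_riemannZeta.analyticAt
    (isOpen_compl_singleton.mem_nhds hz)).deriv.differentiableAt

theorem hasSum_log_mul_cpow_neg_deriv_riemannZeta {w : ℂ} (hw : 1 < w.re) :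
    HasSum (fun n : ℕ ↦ (Real.log (n + 1 : ℕ) : ℂ) * ((n + 1 : ℕ) : ℂ) ^ (-w))
      (-deriv riemannZeta w) := by
  have hconv : LSeries.abscissaOfAbsConv 1 < w.re := by
    rw [LSeries.abscissaOfAbsConv_one]
    exact_mod_cast hw
  have hderiv : deriv (LSeries 1) w = deriv riemannZeta w := by
    refine Filter.EventuallyEq.deriv_eq ?_
    filter_upwards [(isOpen_lt continuous_const Complex.continuous_re).mem_nhds hw] with z hz
    exact LSeries_one_eq_riemannZeta hz
  have hterms : HasSum (LSeries.term (LSeries.logMul 1) w) (-deriv riemannZeta w) := by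
    rw [← hderiv, (LSeries_hasDerivAt hconv).deriv, neg_neg]
    exact (LSeriesSummable_logMul_of_lt_re hconv).hasSum
  have hshift := (hasSum_nat_add_iff' 1).2 hterms
  simp only [Finset.range_one, Finset.sum_singleton, LSeries.term_zero, sub_zero] at hshift
  refine hshift.congr_fun fun n ↦ ?_
  rw [LSeries.term_of_ne_zero n.succ_ne_zero, LSeries.logMul, Complex.cpow_neg, div_eq_mul_inv,
    Complex.natCast_log]
  simp

end ZetaDerivative

section ZetaPoles

theorem tendsto_of_tendsto_sub_div_sub {𝕜 : Type*} [NormedField 𝕜] {F : 𝕜 → 𝕜} {A c p : 𝕜}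
    (h : Tendsto (fun s ↦ (F s - A) / (s - p)) (𝓝[≠] p) (𝓝 c)) :
    Tendsto F (𝓝[≠] p) (𝓝 A) := by
  have hzero : Tendsto (fun s ↦ s - p) (𝓝[≠] p) (𝓝 0) :=
    tendsto_sub_nhds_zero_iff.2 nhdsWithin_le_nhds
  have hmul : Tendsto (fun s ↦ A + (s - p) * ((F s - A) / (s - p))) (𝓝[≠] p) (𝓝 A) := by
    simpa using (hzero.mul h).const_add A
  refine hmul.congr' ?_
  filter_upwards [self_mem_nhdsWithin] with s hs
  rw [mul_div_cancel₀ _ (sub_ne_zero.2 hs), add_sub_cancel]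

variable {F H : ℂ → ℂ} {A c p : ℂ}

theorem tendsto_sub_mul_of_eventuallyEq_mul_riemannZeta_add
    (hF : ∀ᶠ s in 𝓝 p, F s = c * riemannZeta (s - p + 1) + H s) (hH : ContinuousAt H p) :
    Tendsto (fun s ↦ (s - p) * F s) (𝓝[≠] p) (𝓝 c) := by
  have hcont : ContinuousAt (fun s ↦ c * riemannZeta₁ (s - p + 1) + (s - p) * H s) p := by
    have := differentiable_riemannZeta₁.continuous
    fun_prop
  have hlim := hcont.tendsto.mono_left (nhdsWithin_le_nhds (s := {p}ᶜ))
  simp only [sub_self, zero_add, riemannZeta₁_one, mul_one, zero_mul, add_zero] at hlim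
  refine hlim.congr' ?_
  filter_upwards [nhdsWithin_le_nhds hF, self_mem_nhdsWithin] with s hs hne
  have hne' : s - p + 1 ≠ 1 := by simpa [sub_eq_zero] using hne
  rw [hs, riemannZeta₁_eq_mul hne']
  ring

theorem tendsto_sq_sub_mul_sub_div_of_eventuallyEq_deriv_riemannZeta_add
    (hF : ∀ᶠ s in 𝓝 p, F s =
      -A * deriv riemannZeta (s - p + 1) + c * riemannZeta (s - p + 1) + H s)
    (hH : ContinuousAt H p) :
    Tendsto (fun s ↦ ((s - p) ^ 2 * F s - A) / (s - p)) (𝓝[≠] p) (𝓝 c) := by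
  have hcont : ContinuousAt (fun s ↦ c + (s - p) *
      (-A * deriv riemannZeta₀ (s - p + 1) + c * riemannZeta₀ (s - p + 1) + H s)) p := by
    have := differentiable_riemannZeta₀.continuous
    have := differentiable_riemannZeta₀.deriv.continuous
    fun_prop
  have hlim := hcont.tendsto.mono_left (nhdsWithin_le_nhds (s := {p}ᶜ))
  simp only [sub_self, zero_mul, add_zero] at hlim
  refine hlim.congr' ?_
  filter_upwards [nhdsWithin_le_nhds hF, self_mem_nhdsWithin] with s hs hne
  have hsub : s - p ≠ 0 := sub_ne_zero.2 hne
  have hne' : s - p + 1 ≠ 1 := by simpa using hsub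
  rw [hs, deriv_riemannZeta_eq_neg_inv_sub_sq_add hne', riemannZeta_eq_inv_sub_add hne',
    add_sub_cancel_right]
  field_simp
  ring

end ZetaPoles

section Delange

variable {β : ℝ}

/-- The spacing `2π / log β` of the imaginary parts of the poles. -/
def delangeFrequency (β : ℝ) : ℝ :=
  2 * Real.pi / Real.log β

theorem delangeFrequency_ne_zero (hβ : 1 < β) : delangeFrequency β ≠ 0 :=
  div_ne_zero Real.two_pi_pos.ne' (Real.log_pos hβ).ne'

theorem delangeFrequency_mul_mul_I (β : ℝ) (k : ℤ) :
    delangeFrequency β * k * Complex.I = 2 * Real.pi * Complex.I * k / Real.log β := by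
  rw [delangeFrequency]
  push_cast
  ring

theorem delangeCoeff_of_ne_zero (hβ : 1 < β) {k : ℤ} (hk : k ≠ 0) :
    delangeCoeff β k = -(((β : ℂ) - 1) / Real.log β) *
      ((delangeFrequency β * k * Complex.I)⁻¹ * (1 + delangeFrequency β * k * Complex.I)⁻¹ *
        riemannZeta (delangeFrequency β * k * Complex.I)) := by
  have hlog : (Real.log β : ℂ) ≠ 0 := Complex.ofReal_ne_zero.2 (Real.log_pos hβ).ne'
  rw [delangeFrequency_mul_mul_I, delangeCoeff, if_neg hk, inv_div]
  field_simp

theorem isBigO_inv_add_delangeFrequency_mul (hβ : 1 < β) (x : ℝ) :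
    (fun k : ℤ ↦ (x + delangeFrequency β * k * Complex.I)⁻¹) =O[cofinite]
      fun k ↦ |(k : ℝ)| ^ (-1 : ℝ) := by
  refine Asymptotics.IsBigO.of_bound |delangeFrequency β|⁻¹ ?_
  filter_upwards [eventually_cofinite_ne (0 : ℤ)] with k hk
  have hτ := delangeFrequency_ne_zero hβ
  have hnorm : |delangeFrequency β * k| ≤ ‖(x + delangeFrequency β * k * Complex.I : ℂ)‖ := by
    simpa using Complex.abs_im_le_norm (x + delangeFrequency β * k * Complex.I)
  rw [norm_inv, Real.norm_of_nonneg (by positivity), Real.rpow_neg_one, ← mul_inv, ← abs_mul]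
  gcongr

theorem isBigO_delangeCoeff (hβ : 1 < β) {q : ℝ} (hq : q < 3 / 2) :
    delangeCoeff β =O[cofinite] fun k ↦ |(k : ℝ)| ^ (-q) := by
  obtain ⟨C, hC⟩ := exists_norm_riemannZeta_sub_le (σ := 0) (e := 2 - q)
    (neg_ne_zero.2 (delangeFrequency_ne_zero hβ)) le_rfl zero_le_one (by linarith) 0
  have hzeta : (fun k : ℤ ↦ riemannZeta (delangeFrequency β * k * Complex.I)) =O[cofinite]
      fun k ↦ |(k : ℝ)| ^ (2 - q) := by
    refine Asymptotics.IsBigO.of_bound C (hC.mono fun k hk ↦ ?_)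
    rw [Real.norm_of_nonneg (by positivity)]
    simpa using hk 0 (by simp) (by simp)
  have hinv₀ := isBigO_inv_add_delangeFrequency_mul hβ 0
  have hinv₁ := isBigO_inv_add_delangeFrequency_mul hβ 1
  simp only [Complex.ofReal_zero, zero_add, Complex.ofReal_one] at hinv₀ hinv₁
  refine (((hinv₀.mul hinv₁).mul hzeta).const_mul_left
    (-(((β : ℂ) - 1) / Real.log β))).congr' ?_ ?_ <;>
    filter_upwards [eventually_cofinite_ne (0 : ℤ)] with k hk
  · exact (delangeCoeff_of_ne_zero hβ hk).symm
  · rw [← Real.rpow_add (by positivity), ← Real.rpow_add (by positivity)]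
    ring_nf

theorem exists_isBigO_delangeCoeff (hβ : 1 < β) {x : ℝ} (hx : 0 < x) :
    ∃ q, 1 < q ∧ 3 - 2 * q < x ∧ delangeCoeff β =O[cofinite] fun k ↦ |(k : ℝ)| ^ (-q) := by
  obtain ⟨q, hlower, hupper⟩ := exists_between
    (show max 1 ((3 - x) / 2) < 3 / 2 from max_lt (by norm_num) (by linarith))
  obtain ⟨hq, hqx⟩ := max_lt_iff.1 hlower
  exact ⟨q, hq, by linarith, isBigO_delangeCoeff hβ hupper⟩

theorem summable_delangeCoeff (hβ : 1 < β) : Summable (delangeCoeff β) := by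
  obtain ⟨q, hq, -, hbound⟩ := exists_isBigO_delangeCoeff hβ one_pos
  exact summable_of_isBigO (Real.summable_abs_int_rpow hq) hbound

theorem delangeH_log_div_log (β x : ℝ) :
    delangeH β (Real.log x / Real.log β) =
      ∑' k : ℤ, delangeCoeff β k *
        Complex.exp (delangeFrequency β * k * Real.log x * Complex.I) := by
  refine tsum_congr fun k ↦ ?_
  congr 2
  rw [delangeFrequency]
  push_cast
  ring

/-- The meromorphic continuation of the Dirichlet series of `S_β` to the half-plane `1 < re s`. -/
def delangeContinuation (β : ℝ) (s : ℂ) : ℂ :=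
  -(((β : ℂ) - 1) / (2 * Real.log β)) * deriv riemannZeta (s - 1) +
    shiftedZetaSeries (delangeCoeff β) (delangeFrequency β) (s - 1)

theorem hasSum_cumDigitSumInterp_mul_cpow_neg (hβ : 1 < β) {s : ℂ} (hs : 2 < s.re) :
    HasSum (fun n : ℕ ↦ cumDigitSumInterp β (n + 1) * ((n + 1 : ℕ) : ℂ) ^ (-s))
      (delangeContinuation β s) := by
  have hs₁ : 1 < (s - 1).re := by
    rw [Complex.sub_re, Complex.one_re]
    linarith
  have hsum := ((hasSum_log_mul_cpow_neg_deriv_riemannZeta hs₁).mul_left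
    (((β : ℂ) - 1) / (2 * Real.log β))).add
      (hasSum_tsum_mul_cpow_neg_shiftedZetaSeries (summable_delangeCoeff hβ)
        (delangeFrequency β) hs₁)
  rw [mul_neg, ← neg_mul] at hsum
  refine hsum.congr_fun fun n ↦ ?_
  have hn : ((n + 1 : ℕ) : ℂ) ≠ 0 := Nat.cast_ne_zero.2 n.succ_ne_zero
  rw [cumDigitSumInterp, delangeH_log_div_log, show -(s - 1) = -s + 1 by ring,
    Complex.cpow_add _ _ hn, Complex.cpow_one]
  ring

theorem differentiableAt_delangeContinuation (hβ : 1 < β) {s : ℂ} (hs : 1 < s.re)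
    (hpole : ∀ k : ℤ, s ≠ 2 + delangeFrequency β * k * Complex.I) :
    DifferentiableAt ℂ (delangeContinuation β) s := by
  have hre : 0 < (s - 1).re := by simpa using hs
  have hne (k : ℤ) : s - 1 ≠ 1 + delangeFrequency β * k * Complex.I := fun h ↦
    hpole k (by linear_combination h)
  obtain ⟨q, hq, hqs, hbound⟩ := exists_isBigO_delangeCoeff hβ hre
  have hderiv := differentiableAt_deriv_riemannZeta (z := s - 1) (by simpa using hne 0)
  have hseries := differentiableAt_shiftedZetaSeries (delangeFrequency_ne_zero hβ) hq hbound hre hqs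
    fun k _ ↦ hne k
  unfold delangeContinuation
  fun_prop

theorem exists_delangeContinuation_eventually_eq (hβ : 1 < β) (k : ℤ) :
    ∃ H : ℂ → ℂ, ContinuousAt H (2 + delangeFrequency β * k * Complex.I) ∧
      ∀ᶠ s in 𝓝 (2 + delangeFrequency β * k * Complex.I), delangeContinuation β s =
        -(((β : ℂ) - 1) / (2 * Real.log β)) * deriv riemannZeta (s - 1) +
          delangeCoeff β k *
            riemannZeta (s - (2 + delangeFrequency β * k * Complex.I) + 1) + H s := by
  set p : ℂ := 2 + delangeFrequency β * k * Complex.I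
  have hτ := delangeFrequency_ne_zero hβ
  obtain ⟨q, hq, hqx, hbound⟩ := exists_isBigO_delangeCoeff hβ one_half_pos
  have hrest : Function.update (delangeCoeff β) k 0 =O[cofinite] fun j ↦ |(j : ℝ)| ^ (-q) :=
    hbound.congr' ((eventually_cofinite_ne k).mono fun j hj ↦ by simp [hj]) .rfl
  have hre : (p - 1).re = 1 := by
    norm_num [p]
  have hdiff : DifferentiableAt ℂ (shiftedZetaSeries (Function.update (delangeCoeff β) k 0)
      (delangeFrequency β)) (p - 1) := by
    refine differentiableAt_shiftedZetaSeries hτ hq hrest (by linarith) (by linarith)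
      fun j hj hpole ↦ hj ?_
    have hkj : k = j := by
      simpa [p, hτ] using congrArg Complex.im hpole
    rw [← hkj, Function.update_self]
  refine ⟨fun s ↦ shiftedZetaSeries (Function.update (delangeCoeff β) k 0)
    (delangeFrequency β) (s - 1), hdiff.continuousAt.comp (f := fun s ↦ s - 1) (by fun_prop), ?_⟩
  have hnear : ∀ᶠ s in 𝓝 p, 1 / 2 < (s - 1).re := by
    refine (isOpen_lt continuous_const (by fun_prop)).mem_nhds ?_
    exact one_half_lt_one.trans_eq hre.symm
  filter_upwards [hnear] with s hs
  rw [delangeContinuation, shiftedZetaSeries_eq_add hτ hq hbound (one_half_pos.trans hs)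
    (hqx.trans hs) k, add_assoc]
  congr 4
  simp only [p]
  ring

theorem tendsto_sq_sub_two_mul_delangeContinuation_sub_div (hβ : 1 < β) :
    Tendsto (fun s ↦ ((s - 2) ^ 2 * delangeContinuation β s -
      ((β : ℂ) - 1) / (2 * Real.log β)) / (s - 2)) (𝓝[≠] 2) (𝓝 (delangeCoeff β 0)) := by
  obtain ⟨H, hH, hF⟩ := exists_delangeContinuation_eventually_eq hβ 0
  simp only [Int.cast_zero, mul_zero, zero_mul, add_zero] at hH hF
  refine tendsto_sq_sub_mul_sub_div_of_eventuallyEq_deriv_riemannZeta_add (hF.mono fun s hs ↦ ?_) hH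
  rwa [show s - 2 + 1 = s - 1 by ring] at hs ⊢

theorem tendsto_sub_mul_delangeContinuation (hβ : 1 < β) {k : ℤ} (hk : k ≠ 0) :
    Tendsto (fun s ↦ (s - (2 + delangeFrequency β * k * Complex.I)) * delangeContinuation β s)
      (𝓝[≠] (2 + delangeFrequency β * k * Complex.I)) (𝓝 (delangeCoeff β k)) := by
  obtain ⟨H, hH, hF⟩ := exists_delangeContinuation_eventually_eq hβ k
  have hne : 2 + delangeFrequency β * k * Complex.I - 1 ≠ 1 := fun h ↦ by
    simpa [delangeFrequency_ne_zero hβ, hk] using congrArg Complex.im h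
  have hderiv := (differentiableAt_deriv_riemannZeta hne).continuousAt
  refine tendsto_sub_mul_of_eventuallyEq_mul_riemannZeta_add (H := fun s ↦
    -(((β : ℂ) - 1) / (2 * Real.log β)) * deriv riemannZeta (s - 1) + H s)
    (hF.mono fun s hs ↦ by rw [hs]; ring) ?_
  exact ((hderiv.comp (f := fun s ↦ s - 1) (by fun_prop)).const_mul _).add hH

end Delange

theorem Gbeta_meromorphic_continuation (β : ℝ) (hβ : 1 < β) :
    ∃ G : ℂ → ℂ,
      -- (i) analytic on Re(s) > 1 away from the points 2 + 2πik/log β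
      (∀ s : ℂ, 1 < s.re →
        (∀ k : ℤ, s ≠ 2 + 2 * Real.pi * Complex.I * k / Real.log β) →
        DifferentiableAt ℂ G s) ∧
      -- (ii) agrees with the Dirichlet series for Re(s) > 2
      (∀ s : ℂ, 2 < s.re →
        G s = ∑' n : ℕ, cumDigitSumInterp β (n + 1) * ((n + 1 : ℕ) : ℂ) ^ (-s)) ∧
      -- (iii) double pole at s = 2 with the stated Laurent expansion
      (Filter.Tendsto (fun s : ℂ => (s - 2) ^ 2 * G s) (𝓝[≠] (2 : ℂ))
        (𝓝 (((β : ℂ) - 1) / (2 * Real.log β))) ∧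
       Filter.Tendsto
        (fun s : ℂ => ((s - 2) ^ 2 * G s - ((β : ℂ) - 1) / (2 * Real.log β)) / (s - 2))
        (𝓝[≠] (2 : ℂ))
        (𝓝 ((((β : ℂ) - 1) / (2 * Real.log β)) * (Real.log (2 * Real.pi) - 1)
            - ((β : ℂ) + 1) / 4))) ∧
      -- (iv) simple poles at s = 2 + 2πik/log β, k ≠ 0, with residue c_β(k)
      (∀ k : ℤ, k ≠ 0 →
        Filter.Tendsto
          (fun s : ℂ => (s - (2 + 2 * Real.pi * Complex.I * k / Real.log β)) * G s)
          (𝓝[≠] (2 + 2 * Real.pi * Complex.I * k / Real.log β))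
          (𝓝 (delangeCoeff β k))) := by
  refine ⟨delangeContinuation β, fun s hs hpole ↦ ?_, fun s hs ↦ ?_, ?_, fun k hk ↦ ?_⟩
  · simp only [← delangeFrequency_mul_mul_I] at hpole
    exact differentiableAt_delangeContinuation hβ hs hpole
  · exact (hasSum_cumDigitSumInterp_mul_cpow_neg hβ hs).tsum_eq.symm
  · have hlaurent := tendsto_sq_sub_two_mul_delangeContinuation_sub_div hβ
    rw [delangeCoeff, if_pos rfl] at hlaurent
    exact ⟨tendsto_of_tendsto_sub_div_sub hlaurent, hlaurent⟩
  · simp only [← delangeFrequency_mul_mul_I]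
    exact tendsto_sub_mul_delangeContinuation hβ hk
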